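/- Let a be an object and J ⊆ I. Then the poset Hom(−, a) ∩ W_J(C), ordered by the right weak order, has a unique minimal element (the identity id^a) and a unique maximal element w_J (the longest word over J). Moreover J(w_J) = J, i.e., every reduced decomposition of w_J uses exactly the letters in J. -/

import Mathlib

/-!
The length of a morphism equals its number of inversions, i.e. of positive roots at its source
that it makes negative (`len_eq_N`); once this is known, everything is a statement about
inversion sets.

*Length = inversions.* Each simple reflection sends every positive root other than its
own simple root to a positive root, so appending a letter `j` on the right changes the number of inversions by `±1`,
according to the sign of the image of `α_j` (`N_snoc_pos`, `N_snoc_neg`). It remains to prove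
the exchange property (`exchange`): a word with as many inversions as letters that makes `α_j`
negative can be rewritten, at the same length, to end in `j`. If the word ends in `i ≠ j`, split
off on the right a maximal subword in the letters `i`, `j`. By maximality that subword makes both
`α_i` and `α_j` negative, so it is the alternating word whose length `m` is the number of positive
roots in the span of `α_i`, `α_j`, and it may be replaced by the other alternating word of length
`m` (`braid`). In the latter relation, equality of the end objects is axiom (R4). Equality of the
maps holds because the quotient of the two and its inverse both keep all simple roots positive,
while the determinant of the quotient on the span is `1`, which excludes the swap of `α_i` and
`α_j`.

*The longest element.* Inversions of a word in `J` are supported on `J` (`support_of_mem_inv`).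
Let `x` be an element of maximal length in `Hom(-,a) ∩ W_J`, which exists because there are
finitely many roots. Then `x` makes `α_j` negative for all `j ∈ J`, hence every positive root
supported on `J`. So for each `y` in `Hom(-,a) ∩ W_J`, all inversions of `y⁻¹ x` are inversions
of `x`; the inversion numbers of `y` and `y⁻¹ x` then add up to that of `x` (`N_append_eq`), which
says `y ≤_R x` (`exists_longest`). Uniqueness is antisymmetry of the weak order.

*Letters.* For `j ∈ J`, `σ_j ≤_R w_J` gives a reduced decomposition starting with `j`. Conversely
a letter outside `J` in a reduced decomposition of an element of `W_J` would produce an inversion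
not supported on `J` (`mem_of_mem_reduced`).
-/

set_option linter.unusedSectionVars false

/-- A Cartan scheme `C = C(I, A, (ρ_i), (C^a))`. -/
structure CartanScheme (I A : Type) [Fintype I] [DecidableEq I] [Fintype A] [Nonempty A] where
  ρ : I → A → A
  c : A → I → I → ℤ
  ρ_invol : ∀ i a, ρ i (ρ i a) = a
  c_diag : ∀ a i, c a i i = 2
  c_offdiag_nonpos : ∀ a i j, i ≠ j → c a i j ≤ 0
  c_zero_symm : ∀ a i j, c a i j = 0 → c a j i = 0
  c_rho : ∀ a i j, c (ρ i a) i j = c a i j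

namespace CartanScheme

variable {I A : Type} [Fintype I] [DecidableEq I] [Fintype A] [Nonempty A] [DecidableEq A]
variable (C : CartanScheme I A)

/-- The simple reflection `σ_i^a` as a map `ℤ^I → ℤ^I`, `σ_i^a(α_j) = α_j - c^a_{ij} α_i`. -/
def sigma (a : A) (i : I) : (I → ℤ) → (I → ℤ) :=
  fun v k => v k - (if k = i then ∑ j, C.c a i j * v j else 0)

/-- Target object of the word `[i_1, …, i_k]` read at source object `a`:
`ρ_{i_1} ⋯ ρ_{i_k}(a)`. -/
def wordTarget (a : A) : List I → A
  | [] => a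
  | i :: l => C.ρ i (wordTarget a l)

/-- The map `σ_{i_1} ⋯ σ_{i_k}^a : ℤ^I → ℤ^I` determined by a word with source `a`. -/
def wordMap (a : A) : List I → ((I → ℤ) → (I → ℤ))
  | [] => id
  | i :: l => C.sigma (C.wordTarget a l) i ∘ wordMap a l

theorem wordTarget_append (a : A) (l₁ l₂ : List I) :
    C.wordTarget a (l₁ ++ l₂) = C.wordTarget (C.wordTarget a l₂) l₁ := by
  induction l₁ with
  | nil => rfl
  | cons i l ih => simp [wordTarget, ih]

theorem wordMap_append (a : A) (l₁ l₂ : List I) :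
    C.wordMap a (l₁ ++ l₂) = C.wordMap (C.wordTarget a l₂) l₁ ∘ C.wordMap a l₂ := by
  induction l₁ with
  | nil => rfl
  | cons i l ih => simp [wordMap, ih, wordTarget_append, Function.comp_assoc]

/-- A morphism of the Weyl groupoid `W(C)`: a source object, a target object, and a map
`ℤ^I → ℤ^I` which is a composition of simple reflections along some word. -/
@[ext]
structure Mor where
  src : A
  tgt : A
  toFun : (I → ℤ) → (I → ℤ)
  spec : ∃ l : List I, C.wordTarget src l = tgt ∧ C.wordMap src l = toFun

variable {C}

/-- A word realizes a morphism. -/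
def Realizes (w : Mor C) (l : List I) : Prop :=
  C.wordTarget w.src l = w.tgt ∧ C.wordMap w.src l = w.toFun

variable (C)

/-- The identity morphism `id^a`. -/
def idMor (a : A) : Mor C := ⟨a, a, id, ⟨[], rfl, rfl⟩⟩

/-- The generator `σ_i^a ∈ Hom(a, ρ_i(a))`. -/
def genMor (i : I) (a : A) : Mor C :=
  ⟨a, C.ρ i a, C.sigma a i, ⟨[i], rfl, Function.comp_id _⟩⟩

/-- The simple reflection with target `a`, i.e. `id^a σ_i = σ_i^{ρ_i(a)} ∈ Hom(ρ_i(a), a)`. -/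
def sgen (a : A) (i : I) : Mor C :=
  { src := C.ρ i a, tgt := a, toFun := C.sigma (C.ρ i a) i,
    spec := ⟨[i], by simp [wordTarget, C.ρ_invol], Function.comp_id _⟩ }

variable {C}

/-- Composition `u ∘ v` (with `v` applied first); junk value `u` if not composable. -/
def Mor.comp (u v : Mor C) : Mor C :=
  if h : v.tgt = u.src then
    { src := v.src, tgt := u.tgt, toFun := u.toFun ∘ v.toFun,
      spec := by
        obtain ⟨lu, hu1, hu2⟩ := u.spec
        obtain ⟨lv, hv1, hv2⟩ := v.spec
        refine ⟨lu ++ lv, ?_, ?_⟩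
        · rw [C.wordTarget_append, hv1, h, hu1]
        · rw [C.wordMap_append, hv1, h, hu2, hv2] }
  else u

/-- Length of a morphism: minimal length of a realizing word. -/
noncomputable def len (w : Mor C) : ℕ := sInf {k | ∃ l : List I, Realizes w l ∧ l.length = k}

/-- A reduced decomposition. -/
def IsReduced (w : Mor C) (l : List I) : Prop := Realizes w l ∧ l.length = len w

/-- The (right) weak order: `u ≤_R uv` iff `ℓ(uv) = ℓ(u) + ℓ(v)`. -/
def weakLe (u w : Mor C) : Prop :=
  ∃ v : Mor C, v.tgt = u.src ∧ w = u.comp v ∧ len w = len u + len v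

/-- Membership in the parabolic subgroupoid `W_J(C)`. -/
def InParabolic (J : Set I) (w : Mor C) : Prop :=
  ∃ l : List I, (∀ i ∈ l, i ∈ J) ∧ Realizes w l

/-- Length with respect to the generators `σ_j`, `j ∈ J`. -/
noncomputable def lenPar (J : Set I) (w : Mor C) : ℕ :=
  sInf {k | ∃ l : List I, (∀ i ∈ l, i ∈ J) ∧ Realizes w l ∧ l.length = k}

/-- The set of letters occurring in some reduced decomposition of `w`;
by the theorem on reduced decompositions this is the set `J(w)`. -/
def Jset (w : Mor C) : Set I := {i | ∃ l : List I, IsReduced w l ∧ i ∈ l}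

variable (C)

/-- The set of real roots at the object `a`. -/
def roots (a : A) : Set (I → ℤ) :=
  {α | ∃ (b : A) (l : List I) (j : I),
    C.wordTarget b l = a ∧ α = C.wordMap b l (Pi.single j 1)}

/-- The set of positive (real) roots at `a`. -/
def posRoots (a : A) : Set (I → ℤ) := {α ∈ C.roots a | ∀ i, 0 ≤ α i}

/-- `R^re(C)` is a finite root system of type `C`: axioms (R1), (R2), (R4) and finiteness
((R3) holds automatically for real roots). -/
def IsFRS : Prop :=
  (∀ a : A, (C.roots a).Finite) ∧
  (∀ (a : A) (α : I → ℤ), α ∈ C.roots a → (∀ i, 0 ≤ α i) ∨ (∀ i, α i ≤ 0)) ∧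
  (∀ (a : A) (i : I) (α : I → ℤ), α ∈ C.roots a → (∃ z : ℤ, α = z • Pi.single i 1) →
    α = Pi.single i 1 ∨ α = -Pi.single i 1) ∧
  (∀ (a : A) (i j : I), i ≠ j →
    (fun x => C.ρ i (C.ρ j x))^[(C.roots a ∩
      {α | ∃ m n : ℕ, α = (m : ℤ) • Pi.single i 1 + (n : ℤ) • Pi.single j 1}).ncard] a = a)

variable {C}

/-- `I_L(w)`: the set of simple reflections with target `w.tgt` below `w` in weak order. -/
def IL (w : Mor C) : Set I := {i | weakLe (sgen C w.tgt i) w}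

/-- `m` is the longest element of `Hom(-,a) ∩ W_J(C)`, i.e. `w_J` at the object `a`. -/
def IsLongestPar (a : A) (J : Set I) (m : Mor C) : Prop :=
  m.tgt = a ∧ InParabolic J m ∧
    ∀ x : Mor C, x.tgt = a → InParabolic J x → weakLe x m

/-- `m` is the longest element `w_I` of `Hom(-,a)`. -/
def IsLongestAt (a : A) (m : Mor C) : Prop :=
  m.tgt = a ∧ ∀ x : Mor C, x.tgt = a → weakLe x m

/-- `z` is the meet of `x` and `y` in `(Hom(-,a), ≤_R)`. -/
def IsMeet (a : A) (x y z : Mor C) : Prop :=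
  z.tgt = a ∧ weakLe z x ∧ weakLe z y ∧
    ∀ t : Mor C, t.tgt = a → weakLe t x → weakLe t y → weakLe t z

/-- `z` is the join of `x` and `y` in `(Hom(-,a), ≤_R)`. -/
def IsJoin (a : A) (x y z : Mor C) : Prop :=
  z.tgt = a ∧ weakLe x z ∧ weakLe y z ∧
    ∀ t : Mor C, t.tgt = a → weakLe x t → weakLe y t → weakLe z t

/-- The left coset `u W_J(C) ⊆ Hom(-, u.tgt)`. -/
def leftCoset (u : Mor C) (J : Set I) : Set (Mor C) :=
  {x | ∃ v : Mor C, InParabolic J v ∧ v.tgt = u.src ∧ x = u.comp v}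

end CartanScheme

namespace CartanScheme

variable {I A : Type} [Fintype I] [DecidableEq I] [Fintype A] [Nonempty A] [DecidableEq A]
variable {C : CartanScheme I A}

/-! ### Words as linear maps -/

variable (C) in
/-- The linear map underlying `wordMap`. -/
def wordLin (b : A) : List I → ((I → ℤ) →ₗ[ℤ] (I → ℤ))
  | [] => LinearMap.id
  | i :: l =>
    (LinearMap.id - (LinearMap.single ℤ (fun _ : I => ℤ) i) ∘ₗ
      (∑ j, C.c (C.wordTarget b l) i j • LinearMap.proj j)) ∘ₗ wordLin b l

theorem wordMap_eq_lin (b : A) (l : List I) : C.wordMap b l = C.wordLin b l := by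
  induction l with
  | nil => rfl
  | cons i l ih =>
    funext v k
    simp only [wordMap, wordLin, Function.comp, ih, sigma]
    by_cases h : k = i
    · subst h; simp
    · simp [h]

theorem wordMap_neg (b : A) (l : List I) (v : I → ℤ) :
    C.wordMap b l (-v) = - C.wordMap b l v := by
  rw [wordMap_eq_lin, map_neg]

theorem wordMap_add (b : A) (l : List I) (v w : I → ℤ) :
    C.wordMap b l (v + w) = C.wordMap b l v + C.wordMap b l w := by
  rw [wordMap_eq_lin, map_add]

theorem wordMap_zsmul (b : A) (l : List I) (n : ℤ) (v : I → ℤ) :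
    C.wordMap b l (n • v) = n • C.wordMap b l v := by
  rw [wordMap_eq_lin, map_zsmul]

theorem wordMap_zero (b : A) (l : List I) : C.wordMap b l 0 = 0 := by
  rw [wordMap_eq_lin, map_zero]

theorem wordMap_eq_sum (b : A) (l : List I) (v : I → ℤ) :
    C.wordMap b l v = ∑ k, v k • C.wordMap b l (Pi.single k 1) := by
  rw [wordMap_eq_lin]
  conv_lhs => rw [pi_eq_sum_univ' v]
  rw [map_sum]
  refine Finset.sum_congr rfl fun k _ => ?_
  rw [map_zsmul]

theorem sigma_sigma (b : A) (i : I) (v : I → ℤ) :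
    C.sigma (C.ρ i b) i (C.sigma b i v) = v := by
  funext k
  by_cases h : k = i
  · subst h
    have h1 : ∑ j, C.c b k j * C.sigma b k v j
        = ∑ j, C.c b k j * v j - C.c b k k * ∑ j, C.c b k j * v j := by
      simp only [sigma, mul_sub, Finset.sum_sub_distrib]
      simp
    simp only [sigma, C.c_rho, if_true] at h1 ⊢
    rw [h1, C.c_diag]; ring
  · simp [sigma, h]

theorem sigma_single (b : A) (i : I) :
    C.sigma b i (Pi.single i 1) = -Pi.single i 1 := by
  funext k
  by_cases h : k = i
  · subst h; simp [sigma, Pi.single_apply, C.c_diag]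
  · simp [sigma, h]

theorem wordTarget_reverse (b : A) (l : List I) :
    C.wordTarget (C.wordTarget b l) l.reverse = b := by
  induction l with
  | nil => rfl
  | cons i l ih => simp [wordTarget, wordTarget_append, C.ρ_invol, ih]

theorem wordMap_reverse (b : A) (l : List I) (v : I → ℤ) :
    C.wordMap (C.wordTarget b l) l.reverse (C.wordMap b l v) = v := by
  induction l with
  | nil => rfl
  | cons i l ih =>
    simp [wordTarget, wordMap, wordMap_append, C.ρ_invol, sigma_sigma, ih]

theorem wordMap_reverse' (b : A) (l : List I) (v : I → ℤ) :
    C.wordMap b l (C.wordMap (C.wordTarget b l) l.reverse v) = v := by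
  have := C.wordMap_reverse (C.wordTarget b l) l.reverse v
  rwa [List.reverse_reverse, wordTarget_reverse] at this

theorem wordMap_inj (b : A) (l : List I) : Function.Injective (C.wordMap b l) :=
  Function.LeftInverse.injective (wordMap_reverse b l)

/-- Reflections along letters other than `k` do not change the `k`-th coordinate. -/
theorem wordMap_apply_of_notMem (b : A) (l : List I) (v : I → ℤ) (k : I) (hk : k ∉ l) :
    C.wordMap b l v k = v k := by
  induction l with
  | nil => rfl
  | cons i l ih =>
    rw [List.mem_cons, not_or] at hk
    simp [wordMap, sigma, hk.1, ih hk.2]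

/-- Two words starting at `b` represent the same morphism. -/
def WEq (C : CartanScheme I A) (b : A) (l l' : List I) : Prop :=
  C.wordTarget b l = C.wordTarget b l' ∧ C.wordMap b l = C.wordMap b l'

theorem WEq.symm {b : A} {l l' : List I} (h : WEq C b l l') : WEq C b l' l :=
  ⟨h.1.symm, h.2.symm⟩

theorem WEq.trans {b : A} {l l' l'' : List I} (h : WEq C b l l') (h' : WEq C b l' l'') :
    WEq C b l l'' :=
  ⟨h.1.trans h'.1, h.2.trans h'.2⟩

theorem WEq.append_right {b : A} {l l' : List I} (q : List I)
    (h : WEq C (C.wordTarget b q) l l') : WEq C b (l ++ q) (l' ++ q) := by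
  simp only [WEq, wordTarget_append, wordMap_append]
  exact ⟨h.1, by rw [h.2]⟩

theorem WEq.append_left {b : A} {q q' : List I} (l : List I)
    (h : WEq C b q q') : WEq C b (l ++ q) (l ++ q') := by
  simp only [WEq, wordTarget_append, wordMap_append]
  exact ⟨by rw [h.1], by rw [h.2, h.1]⟩

theorem WEq.cancel (b : A) (l : List I) (i : I) : WEq C b (l ++ [i] ++ [i]) l := by
  have h : WEq C b ([i] ++ [i]) [] := by
    refine ⟨by simp [wordTarget, C.ρ_invol], ?_⟩
    funext v
    simp [wordMap, wordTarget, sigma_sigma]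
  simpa using h.append_left l

/-! ### Roots and inversions -/

theorem wordMap_mem_roots {b : A} {α : I → ℤ} (h : α ∈ C.roots b) (l : List I) :
    C.wordMap b l α ∈ C.roots (C.wordTarget b l) := by
  obtain ⟨c, q, j, rfl, rfl⟩ := h
  exact ⟨c, l ++ q, j, by rw [wordTarget_append], by rw [wordMap_append]; rfl⟩

theorem single_mem_roots (b : A) (i : I) : (Pi.single i 1 : I → ℤ) ∈ C.roots b :=
  ⟨b, [], i, rfl, rfl⟩

theorem neg_mem_roots {b : A} {α : I → ℤ} (h : α ∈ C.roots b) : -α ∈ C.roots b := by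
  obtain ⟨c, q, j, rfl, rfl⟩ := h
  refine ⟨C.ρ j c, q ++ [j], j, by simp [wordTarget_append, wordTarget, C.ρ_invol], ?_⟩
  simp [wordMap_append, wordMap, wordTarget, C.ρ_invol, sigma_single, wordMap_neg]

theorem ne_zero_of_mem_roots {b : A} {α : I → ℤ} (h : α ∈ C.roots b) : α ≠ 0 := by
  obtain ⟨c, q, j, rfl, rfl⟩ := h
  intro h0
  rw [← C.wordMap_zero c q] at h0
  have := congrFun (C.wordMap_inj c q h0) j
  simp at this

theorem le_zero_iff_not (hC : C.IsFRS) {b : A} {α : I → ℤ} (h : α ∈ C.roots b) :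
    α ≤ 0 ↔ ¬ 0 ≤ α := by
  constructor
  · intro h1 h2
    exact ne_zero_of_mem_roots h (le_antisymm h1 h2)
  · intro h1
    exact (hC.2.1 b α h).resolve_left h1

theorem nonneg_of_coord (hC : C.IsFRS) {b : A} {α : I → ℤ} (h : α ∈ C.roots b) (k : I)
    (hk : 0 < α k) : 0 ≤ α := by
  by_contra h1
  have := (le_zero_iff_not hC h).2 h1 k
  simp only [Pi.zero_apply] at this
  omega

variable (C) in
/-- The inversions of a word at `b`: positive roots at `b` which it sends to negative roots. -/
def inv (b : A) (l : List I) : Set (I → ℤ) :=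
  {α | α ∈ C.roots b ∧ 0 ≤ α ∧ ¬ 0 ≤ C.wordMap b l α}

variable (C) in
/-- The number of inversions of a word. -/
noncomputable def N (b : A) (l : List I) : ℕ := (C.inv b l).ncard

theorem inv_finite (hC : C.IsFRS) (b : A) (l : List I) : (C.inv b l).Finite :=
  (hC.1 b).subset fun _ h => h.1

theorem WEq.N_eq {b : A} {l l' : List I} (h : WEq C b l l') : C.N b l = C.N b l' := by
  rw [N, N, inv, inv, h.2]

theorem N_append_le (hC : C.IsFRS) (b : A) (p q : List I) :
    C.N b (p ++ q) ≤ C.N (C.wordTarget b q) p + C.N b q := by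
  have hsub : C.inv b (p ++ q) ⊆
      C.wordMap (C.wordTarget b q) q.reverse '' C.inv (C.wordTarget b q) p ∪ C.inv b q := by
    rintro α ⟨h1, h2, h3⟩
    by_cases h : 0 ≤ C.wordMap b q α
    · left
      refine ⟨C.wordMap b q α, ⟨wordMap_mem_roots h1 q, h, ?_⟩, wordMap_reverse b q α⟩
      rwa [wordMap_append] at h3
    · exact Or.inr ⟨h1, h2, h⟩
  refine (Set.ncard_le_ncard hsub (((inv_finite hC _ _).image _).union (inv_finite hC _ _))).trans
    ((Set.ncard_union_le _ _).trans ?_)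
  exact Nat.add_le_add_right (Set.ncard_image_le (inv_finite hC _ _)) _

/-- Numbers of inversions add up as soon as all inversions of the right factor survive. -/
theorem N_append_eq (hC : C.IsFRS) (b : A) (p q : List I)
    (h : C.inv b q ⊆ C.inv b (p ++ q)) :
    C.N b (p ++ q) = C.N (C.wordTarget b q) p + C.N b q := by
  refine le_antisymm (N_append_le hC b p q) ?_
  have hsub : C.wordMap (C.wordTarget b q) q.reverse '' C.inv (C.wordTarget b q) p ∪ C.inv b q
      ⊆ C.inv b (p ++ q) := by
    refine Set.union_subset ?_ h
    rintro _ ⟨β, ⟨h1, h2, h3⟩, rfl⟩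
    have hr : C.wordMap (C.wordTarget b q) q.reverse β ∈ C.roots b := by
      have := wordMap_mem_roots h1 q.reverse
      rwa [wordTarget_reverse] at this
    refine ⟨hr, ?_, by rwa [wordMap_append, Function.comp, wordMap_reverse']⟩
    by_contra hn
    -- otherwise the negative of the preimage is an inversion of `q` not surviving in `p ++ q`
    have hi : -C.wordMap (C.wordTarget b q) q.reverse β ∈ C.inv b q := by
      refine ⟨neg_mem_roots hr, neg_nonneg.2 ((le_zero_iff_not hC hr).2 hn), ?_⟩
      rw [wordMap_neg, wordMap_reverse', neg_nonneg, le_zero_iff_not hC h1]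
      exact not_not.2 h2
    have := (h hi).2.2
    rw [wordMap_append, Function.comp, wordMap_neg, wordMap_reverse', wordMap_neg, neg_nonneg,
      le_zero_iff_not hC (wordMap_mem_roots h1 p)] at this
    exact this h3
  have hd : Disjoint (C.wordMap (C.wordTarget b q) q.reverse '' C.inv (C.wordTarget b q) p)
      (C.inv b q) := by
    rw [Set.disjoint_left]
    rintro _ ⟨β, h1, rfl⟩ h2
    have := h2.2.2
    rw [wordMap_reverse'] at this
    exact this h1.2.1
  have := Set.ncard_le_ncard hsub (inv_finite hC _ _)
  rwa [Set.ncard_union_eq hd ((inv_finite hC _ _).image _) (inv_finite hC _ _),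
    Set.ncard_image_of_injective _ (wordMap_inj _ _)] at this

/-- A positive root other than `α_i` has a positive coordinate outside `i`. -/
theorem exists_coord_pos (hC : C.IsFRS) {b : A} {α : I → ℤ} (h : α ∈ C.roots b) (h0 : 0 ≤ α)
    (i : I) (hi : α ≠ Pi.single i 1) : ∃ k, k ≠ i ∧ 0 < α k := by
  by_contra! hn
  have hz : α = α i • Pi.single i 1 := by
    funext k
    by_cases hk : k = i
    · subst hk; simp
    · have h1 := hn k hk
      have h2 : 0 ≤ α k := h0 k
      simp [hk]; omega
  rcases hC.2.2.1 b i α h ⟨_, hz⟩ with h1 | h1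
  · exact hi h1
  · have := h0 i
    rw [h1] at this
    simp at this

theorem sigma_nonneg (hC : C.IsFRS) {b : A} {α : I → ℤ} (h : α ∈ C.roots b) (h0 : 0 ≤ α)
    (i : I) (hi : α ≠ Pi.single i 1) : 0 ≤ C.sigma b i α := by
  obtain ⟨k, hk, hp⟩ := exists_coord_pos hC h h0 i hi
  refine nonneg_of_coord hC (wordMap_mem_roots h [i]) k ?_
  have := wordMap_apply_of_notMem (C := C) b [i] α k (by simpa using hk)
  simp only [wordMap, wordTarget, Function.comp, id] at this ⊢
  rwa [this]

theorem single_nonneg' (i : I) : (0 : I → ℤ) ≤ Pi.single i 1 := by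
  intro k; by_cases h : k = i
  · subst h; simp
  · simp [h]

theorem not_nonneg_neg_single (i : I) : ¬ (0 : I → ℤ) ≤ -Pi.single i 1 := by
  intro h; have := h i; simp at this

theorem inv_singleton (hC : C.IsFRS) (b : A) (i : I) : C.inv b [i] = {Pi.single i 1} := by
  ext α
  simp only [inv, Set.mem_ofPred_eq, Set.mem_singleton_iff]
  constructor
  · rintro ⟨h1, h2, h3⟩
    by_contra hi
    exact h3 (sigma_nonneg hC h1 h2 i hi)
  · rintro rfl
    refine ⟨single_mem_roots b i, single_nonneg' i, ?_⟩
    simp only [wordMap, wordTarget, Function.comp, id, sigma_single]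
    exact not_nonneg_neg_single i

theorem N_singleton (hC : C.IsFRS) (b : A) (i : I) : C.N b [i] = 1 := by
  rw [N, inv_singleton hC, Set.ncard_singleton]

theorem N_nil (b : A) : C.N b [] = 0 := by
  rw [N]
  have : C.inv b [] = ∅ := by
    ext α; simp only [inv, wordMap, Set.mem_ofPred_eq, Set.mem_empty_iff_false, id]; tauto
  simp [this]

theorem N_le_length (hC : C.IsFRS) (b : A) (l : List I) : C.N b l ≤ l.length := by
  induction l with
  | nil => simp [N_nil]
  | cons i l ih =>
    have := N_append_le hC b [i] l
    rw [N_singleton hC] at this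
    simp only [List.singleton_append, List.length_cons] at this ⊢
    omega

theorem N_snoc_pos (hC : C.IsFRS) (b : A) (l : List I) (i : I)
    (h : 0 ≤ C.wordMap (C.ρ i b) l (Pi.single i 1)) :
    C.N b (l ++ [i]) = C.N (C.ρ i b) l + 1 := by
  rw [N_append_eq hC b l [i], N_singleton hC]; · rfl
  rw [inv_singleton hC, Set.singleton_subset_iff]
  refine ⟨single_mem_roots b i, single_nonneg' i, ?_⟩
  simp only [wordMap_append, wordMap, wordTarget, Function.comp, id, sigma_single, wordMap_neg,
    neg_nonneg]
  intro h'
  exact ne_zero_of_mem_roots (wordMap_mem_roots (single_mem_roots (C.ρ i b) i) l)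
    (le_antisymm h' h)

theorem wordMap_snoc_single (b : A) (l : List I) (i : I) :
    C.wordMap b (l ++ [i]) (Pi.single i 1) = - C.wordMap (C.ρ i b) l (Pi.single i 1) := by
  simp [wordMap_append, wordMap, wordTarget, sigma_single, wordMap_neg]

theorem N_snoc_neg (hC : C.IsFRS) (b : A) (l : List I) (i : I)
    (h : ¬ 0 ≤ C.wordMap (C.ρ i b) l (Pi.single i 1)) :
    C.N b (l ++ [i]) + 1 = C.N (C.ρ i b) l := by
  have h' : 0 ≤ C.wordMap (C.ρ i (C.ρ i b)) (l ++ [i]) (Pi.single i 1) := by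
    rw [C.ρ_invol, wordMap_snoc_single, neg_nonneg]
    exact (le_zero_iff_not hC (wordMap_mem_roots (single_mem_roots _ i) l)).2 h
  have := N_snoc_pos hC (C.ρ i b) (l ++ [i]) i h'
  rw [C.ρ_invol, (WEq.cancel _ l i).N_eq] at this
  exact this.symm

/-- If a word ending in `i` has as many inversions as letters, it makes `α_i` negative. -/
theorem neg_last (hC : C.IsFRS) (b : A) (l : List I) (i : I)
    (h : C.N b (l ++ [i]) = l.length + 1) :
    ¬ 0 ≤ C.wordMap b (l ++ [i]) (Pi.single i 1) := by
  intro h'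
  have h1 : ¬ 0 ≤ C.wordMap (C.ρ i b) l (Pi.single i 1) := by
    rw [wordMap_snoc_single, neg_nonneg] at h'
    exact (le_zero_iff_not hC (wordMap_mem_roots (single_mem_roots _ i) l)).1 h'
  have := N_snoc_neg hC b l i h1
  have := N_le_length hC (C.ρ i b) l
  omega

/-! ### Rank two -/

variable (C) in
/-- The positive roots at `b` in the span of `α_i` and `α_j`. -/
def S (i j : I) (b : A) : Set (I → ℤ) :=
  {α | α ∈ C.roots b ∧ 0 ≤ α ∧ ∀ k, k ≠ i → k ≠ j → α k = 0}

variable (C) in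
/-- The number of positive roots in the span of `α_i` and `α_j`. -/
noncomputable def mnum (i j : I) (b : A) : ℕ := (C.S i j b).ncard

theorem S_symm (i j : I) (b : A) : C.S i j b = C.S j i b := by
  ext α; simp only [S, Set.mem_ofPred_eq]; tauto

theorem mnum_symm (i j : I) (b : A) : C.mnum i j b = C.mnum j i b := by
  rw [mnum, S_symm, mnum]

theorem S_finite (hC : C.IsFRS) (i j : I) (b : A) : (C.S i j b).Finite :=
  (hC.1 b).subset fun _ h => h.1

theorem single_mem_S (i j : I) (b : A) : (Pi.single i 1 : I → ℤ) ∈ C.S i j b :=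
  ⟨single_mem_roots b i, single_nonneg' i, fun k hk _ => by simp [hk]⟩

/-- `S` is the set of roots that counts the order in axiom (R4). -/
theorem S_eq (i j : I) (hij : i ≠ j) (b : A) : C.S i j b = C.roots b ∩
    {α | ∃ m n : ℕ, α = (m : ℤ) • Pi.single i 1 + (n : ℤ) • Pi.single j 1} := by
  ext α
  simp only [S, Set.mem_ofPred_eq, Set.mem_inter_iff]
  refine and_congr_right fun _ => ?_
  constructor
  · rintro ⟨h0, h⟩
    refine ⟨(α i).toNat, (α j).toNat, ?_⟩
    have hi : 0 ≤ α i := h0 i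
    have hj : 0 ≤ α j := h0 j
    funext k
    by_cases hki : k = i
    · subst hki; simp [hij, hi]
    · by_cases hkj : k = j
      · subst hkj; simp [hki, hj]
      · simp [hki, hkj, h k hki hkj]
  · rintro ⟨m, n, rfl⟩
    refine ⟨?_, fun k hki hkj => by simp [hki, hkj]⟩
    have h1 : (0 : I → ℤ) ≤ (m : ℤ) • Pi.single i 1 :=
      smul_nonneg (by positivity) (single_nonneg' i)
    have h2 : (0 : I → ℤ) ≤ (n : ℤ) • Pi.single j 1 :=
      smul_nonneg (by positivity) (single_nonneg' j)
    exact add_nonneg h1 h2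

theorem iterate_R4 (hC : C.IsFRS) (i j : I) (hij : i ≠ j) (b : A) :
    (fun x => C.ρ i (C.ρ j x))^[C.mnum i j b] b = b := by
  have := hC.2.2.2 b i j hij
  rwa [← S_eq i j hij b] at this

theorem mnum_le_rho (hC : C.IsFRS) (i j : I) (b : A) : C.mnum i j b ≤ C.mnum i j (C.ρ i b) := by
  have hsub : C.S i j b ⊆ insert (Pi.single i 1)
      (C.sigma (C.ρ i b) i '' (C.S i j (C.ρ i b) \ {Pi.single i 1})) := by
    rintro α ⟨h1, h2, h3⟩
    rw [Set.mem_insert_iff]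
    by_cases h : α = Pi.single i 1
    · exact Or.inl h
    right
    refine ⟨C.sigma b i α, ⟨⟨wordMap_mem_roots h1 [i], sigma_nonneg hC h1 h2 i h, ?_⟩, ?_⟩,
      sigma_sigma b i α⟩
    · intro k hki hkj
      simp [sigma, hki, h3 k hki hkj]
    · intro he
      have := sigma_sigma (C := C) b i α
      rw [Set.mem_singleton_iff.1 he, sigma_single] at this
      rw [← this] at h2
      exact not_nonneg_neg_single i h2
  have hf := (S_finite hC i j (C.ρ i b)).subset (Set.sdiff_subset (t := {Pi.single i 1}))
  have h1 := Set.ncard_le_ncard hsub ((hf.image _).insert _)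
  have h2 := Set.ncard_insert_le (Pi.single i 1 : I → ℤ)
    (C.sigma (C.ρ i b) i '' (C.S i j (C.ρ i b) \ {Pi.single i 1}))
  have h3 := Set.ncard_image_le (f := C.sigma (C.ρ i b) i) hf
  have h4 := Set.ncard_sdiff_singleton_add_one (single_mem_S (C := C) i j (C.ρ i b))
    (S_finite hC i j (C.ρ i b))
  simp only [mnum]
  omega

theorem mnum_rho (hC : C.IsFRS) (i j : I) (b : A) : C.mnum i j (C.ρ i b) = C.mnum i j b := by
  refine le_antisymm ?_ (mnum_le_rho hC i j b)
  have := mnum_le_rho hC i j (C.ρ i b)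
  rwa [C.ρ_invol] at this

/-- Inversions of a word are supported on its letters: a coordinate outside the letters is not
changed by the word, so if it is positive the root stays positive. -/
theorem support_of_mem_inv (hC : C.IsFRS) {b : A} {l : List I} {α : I → ℤ}
    (h : α ∈ C.inv b l) (k : I) (hk : k ∉ l) : α k = 0 := by
  by_contra hne
  have h0 : 0 ≤ α k := h.2.1 k
  refine h.2.2 (nonneg_of_coord hC (wordMap_mem_roots h.1 l) k ?_)
  rw [wordMap_apply_of_notMem _ _ _ _ hk]
  omega

/-- A word making `α_j` negative for all `j ∈ J` makes all nonnegative vectors with support in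
`J` nonpositive. -/
theorem wordMap_nonpos (hC : C.IsFRS) (J : Set I) (b : A) (l : List I)
    (hJ : ∀ j ∈ J, ¬ 0 ≤ C.wordMap b l (Pi.single j 1)) {v : I → ℤ} (h0 : 0 ≤ v)
    (hv : ∀ k, k ∉ J → v k = 0) : C.wordMap b l v ≤ 0 := by
  rw [wordMap_eq_sum]
  refine Finset.sum_nonpos fun k _ => ?_
  by_cases hk : k ∈ J
  · exact smul_nonpos_of_nonneg_of_nonpos (h0 k)
      ((le_zero_iff_not hC (wordMap_mem_roots (single_mem_roots b k) l)).2 (hJ k hk))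
  · rw [hv k hk, zero_smul]

theorem wordMap_nonneg (b : A) (l : List I) (J : Set I)
    (hJ : ∀ j ∈ J, 0 ≤ C.wordMap b l (Pi.single j 1)) {v : I → ℤ} (h0 : 0 ≤ v)
    (hv : ∀ k, k ∉ J → v k = 0) : 0 ≤ C.wordMap b l v := by
  rw [wordMap_eq_sum]
  refine Finset.sum_nonneg fun k _ => ?_
  by_cases hk : k ∈ J
  · exact smul_nonneg (h0 k) (hJ k hk)
  · rw [hv k hk, zero_smul]

theorem inv_subset_S (hC : C.IsFRS) {i j : I} {b : A} {v : List I}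
    (hv : ∀ x ∈ v, x = i ∨ x = j) : C.inv b v ⊆ C.S i j b := fun α h =>
  ⟨h.1, h.2.1, fun k hki hkj => support_of_mem_inv hC h k fun hk => by
    rcases hv k hk with h | h <;> contradiction⟩

theorem N_le_mnum (hC : C.IsFRS) {i j : I} {b : A} {v : List I}
    (hv : ∀ x ∈ v, x = i ∨ x = j) : C.N b v ≤ C.mnum i j b :=
  Set.ncard_le_ncard (inv_subset_S hC hv) (S_finite hC i j b)

theorem inv_eq_S (hC : C.IsFRS) {i j : I} {b : A} {v : List I}
    (hv : ∀ x ∈ v, x = i ∨ x = j) (hi : ¬ 0 ≤ C.wordMap b v (Pi.single i 1))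
    (hj : ¬ 0 ≤ C.wordMap b v (Pi.single j 1)) : C.inv b v = C.S i j b := by
  refine (inv_subset_S hC hv).antisymm fun α h => ⟨h.1, h.2.1, ?_⟩
  rw [← le_zero_iff_not hC (wordMap_mem_roots h.1 v)]
  refine wordMap_nonpos hC {i, j} b v ?_ h.2.1 fun k hk => ?_
  · rintro k (rfl | rfl) <;> assumption
  · simp only [Set.mem_insert_iff, Set.mem_singleton_iff, not_or] at hk
    exact h.2.2 k hk.1 hk.2

/-- The alternating word in `i`, `j` of length `n` whose last letter is `i`. -/
def alt (i j : I) : ℕ → List I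
  | 0 => []
  | n + 1 => alt j i n ++ [i]

theorem length_alt (i j : I) (n : ℕ) : (alt i j n).length = n := by
  induction n generalizing i j with
  | zero => rfl
  | succ n ih => simp [alt, ih]

theorem mem_alt (i j : I) (n : ℕ) : ∀ x ∈ alt i j n, x = i ∨ x = j := by
  induction n generalizing i j with
  | zero => simp [alt]
  | succ n ih =>
    intro x hx
    rw [alt, List.mem_append, List.mem_singleton] at hx
    rcases hx with hx | hx
    · exact (ih j i x hx).symm
    · exact Or.inl hx

theorem N_alt (hC : C.IsFRS) (n : ℕ) : ∀ (i j : I) (b : A), i ≠ j → n ≤ C.mnum i j b →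
    C.N b (alt i j n) = n := by
  induction n with
  | zero => intro i j b _ _; exact N_nil b
  | succ n ih =>
    intro i j b hij hn
    have hm := mnum_rho hC i j b
    have hN := ih j i (C.ρ i b) hij.symm (by rw [mnum_symm]; omega)
    rw [alt, N_snoc_pos hC, hN]
    by_contra hi
    cases n with
    | zero => exact hi (single_nonneg' i)
    | succ n =>
      have hj := neg_last hC (C.ρ i b) (alt i j n) j (by rw [length_alt]; exact hN)
      have := inv_eq_S hC (mem_alt j i (n + 1)) hj hi
      rw [N, this] at hN
      rw [← hm, mnum_symm, mnum] at hn
      omega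

/-- The longest alternating word makes both simple roots negative. -/
theorem alt_neg (hC : C.IsFRS) (i j : I) (b : A) (hij : i ≠ j) (x : I) (hx : x = i ∨ x = j) :
    ¬ 0 ≤ C.wordMap b (alt i j (C.mnum i j b)) (Pi.single x 1) := by
  intro h
  have h1 := N_snoc_pos hC (C.ρ x b) (alt i j (C.mnum i j b)) x (by rwa [C.ρ_invol])
  rw [C.ρ_invol, N_alt hC _ i j b hij le_rfl] at h1
  have h2 : C.N (C.ρ x b) (alt i j (C.mnum i j b) ++ [x]) ≤ C.mnum i j (C.ρ x b) := by
    refine N_le_mnum hC fun y hy => ?_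
    rw [List.mem_append, List.mem_singleton] at hy
    rcases hy with hy | rfl
    · exact mem_alt _ _ _ _ hy
    · exact hx
  have h3 : C.mnum i j (C.ρ x b) = C.mnum i j b := by
    rcases hx with rfl | rfl
    · exact mnum_rho hC _ _ b
    · rw [mnum_symm, mnum_rho hC, mnum_symm]
  omega

theorem wordTarget_alt (n : ℕ) : ∀ (i j : I) (b : A),
    C.wordTarget ((fun x => C.ρ i (C.ρ j x))^[n] b) (alt i j n)
      = C.wordTarget b (alt j i n) := by
  induction n with
  | zero => intro i j b; rfl
  | succ n ih =>
    intro i j b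
    have key : ∀ n (b : A), C.ρ j ((fun x => C.ρ i (C.ρ j x))^[n] b)
        = (fun x => C.ρ j (C.ρ i x))^[n] (C.ρ j b) := by
      intro n
      induction n with
      | zero => intro b; rfl
      | succ n ih' => intro b; rw [Function.iterate_succ_apply, ih', Function.iterate_succ_apply]
    rw [Function.iterate_succ_apply', alt, alt, wordTarget_append, wordTarget_append]
    simp only [wordTarget]
    rw [C.ρ_invol, key, ih j i]

/-- Both longest alternating words end at the same object, by axiom (R4). -/
theorem wordTarget_alt_eq (hC : C.IsFRS) (i j : I) (b : A) (hij : i ≠ j) :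
    C.wordTarget b (alt i j (C.mnum i j b)) = C.wordTarget b (alt j i (C.mnum i j b)) := by
  have := wordTarget_alt (C := C) (C.mnum i j b) i j b
  rwa [iterate_R4 hC i j hij] at this

/-- The determinant on the span of `α_i`, `α_j` of a word in these letters is its sign. -/
theorem det_word {i j : I} (hij : i ≠ j) (b : A) (v : List I) (hv : ∀ x ∈ v, x = i ∨ x = j) :
    C.wordMap b v (Pi.single i 1) i * C.wordMap b v (Pi.single j 1) j
      - C.wordMap b v (Pi.single i 1) j * C.wordMap b v (Pi.single j 1) i
      = (-1) ^ v.length := by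
  induction v with
  | nil => simp [wordMap, hij]
  | cons x v ih =>
    have ih := ih fun y hy => hv y (List.mem_cons_of_mem _ hy)
    have hsum : ∀ (f : I → ℤ) (y : I), y = i ∨ y = j →
        ∑ k, f k * C.wordMap b v (Pi.single y 1) k
        = f i * C.wordMap b v (Pi.single y 1) i + f j * C.wordMap b v (Pi.single y 1) j := by
      intro f y hy
      rw [← Finset.sum_pair (f := fun k => f k * C.wordMap b v (Pi.single y 1) k) hij]
      refine (Finset.sum_subset (Finset.subset_univ _) fun k _ hk => ?_).symm
      simp only [Finset.mem_insert, Finset.mem_singleton, not_or] at hk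
      rw [wordMap_apply_of_notMem, Pi.single_eq_of_ne, mul_zero]
      · rcases hy with rfl | rfl <;> tauto
      · intro h
        have := hv k (List.mem_cons_of_mem _ h)
        tauto
    rw [List.length_cons, pow_succ, ← ih]
    rcases hv x List.mem_cons_self with rfl | rfl
    · simp only [wordMap, Function.comp, sigma, hsum _ x (Or.inl rfl), hsum _ j (Or.inr rfl),
        if_true, if_neg hij.symm, C.c_diag]
      ring
    · simp only [wordMap, Function.comp, sigma, hsum _ i (Or.inl rfl), hsum _ x (Or.inr rfl),
        if_true, if_neg hij, C.c_diag]
      ring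

/-- Two words in `i`, `j` with the same target, both making `α_i` and `α_j`
negative: following one by the inverse of the other keeps every simple root positive. -/
theorem quot_nonneg (hC : C.IsFRS) {i j : I} {b : A} {v v' : List I}
    (hv : ∀ x ∈ v, x = i ∨ x = j) (hv' : ∀ x ∈ v', x = i ∨ x = j)
    (ht : C.wordTarget b v = C.wordTarget b v')
    (hn : ∀ x, x = i ∨ x = j → ¬ 0 ≤ C.wordMap b v (Pi.single x 1))
    (hn' : ∀ x, x = i ∨ x = j → ¬ 0 ≤ C.wordMap b v' (Pi.single x 1)) (k : I) :
    0 ≤ C.wordMap b (v'.reverse ++ v) (Pi.single k 1) := by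
  have hroot := wordMap_mem_roots (single_mem_roots (C := C) b k) (v'.reverse ++ v)
  by_cases hk : k = i ∨ k = j
  · by_contra hneg
    set γ := C.wordMap b (v'.reverse ++ v) (Pi.single k 1) with hγ
    have hb : C.wordTarget b (v'.reverse ++ v) = b := by
      rw [wordTarget_append, ht, wordTarget_reverse]
    rw [hb] at hroot
    have h1 : C.wordMap b v' γ = C.wordMap b v (Pi.single k 1) := by
      rw [hγ, wordMap_append, Function.comp, ht, wordMap_reverse']
    -- `-γ` is a positive root in the span, so `v'` makes it negative
    have h2 : C.wordMap b v' (-γ) ≤ 0 := by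
      refine wordMap_nonpos hC {i, j} b v' (fun x hx => hn' x (by simpa using hx))
        (neg_nonneg.2 ((le_zero_iff_not hC hroot).2 hneg)) fun x hx => ?_
      have hx' : ¬ (x = i ∨ x = j) := by simpa using hx
      rw [Pi.neg_apply, hγ, wordMap_apply_of_notMem, Pi.single_eq_of_ne, neg_zero]
      · rintro rfl; exact hx' hk
      · rw [List.mem_append, List.mem_reverse]
        rintro (h | h)
        · exact hx' (hv' x h)
        · exact hx' (hv x h)
    rw [wordMap_neg, h1, neg_nonpos] at h2
    exact hn k hk h2
  · refine nonneg_of_coord hC hroot k ?_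
    rw [wordMap_apply_of_notMem]
    · simp
    · rw [List.mem_append, List.mem_reverse]
      rintro (h | h)
      · exact hk (hv' k h)
      · exact hk (hv k h)

/-- A nonnegative invertible `2 × 2` integer matrix with nonnegative inverse and determinant `1`
is the identity. -/
theorem two_by_two {a b c d a' b' c' d' : ℤ} (ha : 0 ≤ a) (hb : 0 ≤ b) (hc : 0 ≤ c) (hd : 0 ≤ d)
    (ha' : 0 ≤ a') (hb' : 0 ≤ b') (hc' : 0 ≤ c') (hd' : 0 ≤ d')
    (h11 : a * a' + b * c' = 1) (h12 : a * b' + b * d' = 0)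
    (h21 : c * a' + d * c' = 0) (h22 : c * b' + d * d' = 1)
    (hdet : a * d - b * c = 1) : a = 1 ∧ b = 0 ∧ c = 0 ∧ d = 1 := by
  have e1 : a * b' = 0 := by nlinarith [mul_nonneg ha hb', mul_nonneg hb hd']
  have e2 : b * d' = 0 := by nlinarith [mul_nonneg ha hb', mul_nonneg hb hd']
  have e3 : c * a' = 0 := by nlinarith [mul_nonneg hc ha', mul_nonneg hd hc']
  have e4 : d * c' = 0 := by nlinarith [mul_nonneg hc ha', mul_nonneg hd hc']
  have hbc : 0 ≤ b * c := mul_nonneg hb hc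
  have ha0 : a ≠ 0 := by rintro rfl; omega
  have hd0 : d ≠ 0 := by rintro rfl; omega
  have hb'0 : b' = 0 := (mul_eq_zero.1 e1).resolve_left ha0
  have hc'0 : c' = 0 := (mul_eq_zero.1 e4).resolve_left hd0
  subst hb'0 hc'0
  simp only [mul_zero, add_zero, zero_add] at h11 h22
  have ha'0 : a' ≠ 0 := by rintro rfl; simp at h11
  have hd'0 : d' ≠ 0 := by rintro rfl; simp at h22
  exact ⟨Int.eq_one_of_mul_eq_one_right ha h11, (mul_eq_zero.1 e2).resolve_right hd'0,
    (mul_eq_zero.1 e3).resolve_right ha'0, Int.eq_one_of_mul_eq_one_right hd h22⟩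

/-- Two words in `i`, `j` of the same length, with the same target, both making `α_i` and `α_j`
negative, are equal as maps: the quotient and its inverse are nonnegative, so the quotient
is the identity up to exchanging `α_i` and `α_j`, and the exchange has determinant `-1`. -/
theorem eq_of_both_neg (hC : C.IsFRS) {i j : I} (hij : i ≠ j) {b : A} {v v' : List I}
    (hv : ∀ x ∈ v, x = i ∨ x = j) (hv' : ∀ x ∈ v', x = i ∨ x = j)
    (ht : C.wordTarget b v = C.wordTarget b v') (hlen : v.length = v'.length)
    (hn : ∀ x, x = i ∨ x = j → ¬ 0 ≤ C.wordMap b v (Pi.single x 1))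
    (hn' : ∀ x, x = i ∨ x = j → ¬ 0 ≤ C.wordMap b v' (Pi.single x 1)) :
    C.wordMap b v = C.wordMap b v' := by
  have hg := quot_nonneg hC hv hv' ht hn hn'
  have hg' := quot_nonneg hC hv' hv ht.symm hn' hn
  have hmem : ∀ x ∈ v'.reverse ++ v, x = i ∨ x = j := by
    intro x hx
    rw [List.mem_append, List.mem_reverse] at hx
    exact hx.elim (hv' x) (hv x)
  have hmem' : ∀ x ∈ v.reverse ++ v', x = i ∨ x = j := by
    intro x hx
    rw [List.mem_append, List.mem_reverse] at hx
    exact hx.elim (hv x) (hv' x)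
  have hgg : ∀ y, C.wordMap b (v.reverse ++ v') (C.wordMap b (v'.reverse ++ v) y) = y := by
    intro y
    simp only [wordMap_append, Function.comp]
    rw [ht, wordMap_reverse', ← ht, wordMap_reverse]
  have hdet := det_word (C := C) hij b _ hmem
  rw [List.length_append, List.length_reverse, hlen, Even.neg_one_pow ⟨_, rfl⟩] at hdet
  set g := C.wordMap b (v'.reverse ++ v) with hgdef
  set g' := C.wordMap b (v.reverse ++ v') with hgdef'
  have hout : ∀ y k, k ≠ i → k ≠ j → g y k = y k := fun y k h1 h2 =>
    wordMap_apply_of_notMem _ _ _ _ fun h => (hmem k h).elim h1 h2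
  have hexp : ∀ x, x = i ∨ x = j → g (Pi.single x 1)
      = g (Pi.single x 1) i • Pi.single i 1 + g (Pi.single x 1) j • Pi.single j 1 := by
    intro x hx
    funext k
    by_cases hki : k = i
    · subst hki; simp [hij]
    · by_cases hkj : k = j
      · subst hkj; simp [hki]
      · rw [hout _ k hki hkj]
        have : k ≠ x := by rintro rfl; exact hx.elim hki hkj
        simp [hki, hkj, this]
  have hcomp : ∀ x, x = i ∨ x = j → ∀ k, g (Pi.single x 1) i * g' (Pi.single i 1) k
      + g (Pi.single x 1) j * g' (Pi.single j 1) k = (Pi.single x 1 : I → ℤ) k := by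
    intro x hx k
    have h := congrFun (hgg (Pi.single x 1)) k
    rw [hexp x hx, hgdef', wordMap_add, wordMap_zsmul, wordMap_zsmul] at h
    simpa using h
  have c11 := hcomp i (Or.inl rfl) i
  have c12 := hcomp i (Or.inl rfl) j
  have c21 := hcomp j (Or.inr rfl) i
  have c22 := hcomp j (Or.inr rfl) j
  rw [Pi.single_eq_same] at c11 c22
  rw [Pi.single_eq_of_ne hij.symm] at c12
  rw [Pi.single_eq_of_ne hij] at c21
  obtain ⟨e1, e2, e3, e4⟩ := two_by_two (hg i i) (hg i j) (hg j i) (hg j j) (hg' i i) (hg' i j)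
    (hg' j i) (hg' j j) c11 c12 c21 c22 hdet
  have hgi : g (Pi.single i 1) = Pi.single i 1 := by
    rw [hexp i (Or.inl rfl), e1, e2]; simp
  have hgj : g (Pi.single j 1) = Pi.single j 1 := by
    rw [hexp j (Or.inr rfl), e3, e4]; simp
  have hg'i : g' (Pi.single i 1) = Pi.single i 1 := by
    conv_lhs => rw [← hgi]
    exact hgg _
  have hg'j : g' (Pi.single j 1) = Pi.single j 1 := by
    conv_lhs => rw [← hgj]
    exact hgg _
  -- the remaining simple roots are moved by nonnegative combinations which must cancel
  have hgk : ∀ k, g (Pi.single k 1) = Pi.single k 1 := by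
    intro k
    by_cases hki : k = i
    · rw [hki, hgi]
    by_cases hkj : k = j
    · rw [hkj, hgj]
    have hexpk : g (Pi.single k 1) = Pi.single k 1
        + (g (Pi.single k 1) i • Pi.single i 1 + g (Pi.single k 1) j • Pi.single j 1) := by
      funext y
      by_cases hyi : y = i
      · subst hyi; simp [hij, Ne.symm hki]
      · by_cases hyj : y = j
        · subst hyj; simp [hyi, Ne.symm hkj]
        · rw [hout _ y hyi hyj]
          simp [hyi, hyj]
    have h := hgg (Pi.single k 1)
    rw [hexpk, hgdef', wordMap_add, wordMap_add, wordMap_zsmul, wordMap_zsmul, ← hgdef', hg'i,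
      hg'j] at h
    have hi := congrFun h i
    have hj := congrFun h j
    have p1 := hg k i
    have p2 := hg k j
    have p3 := hg' k i
    have p4 := hg' k j
    simp [hij, hij.symm, Ne.symm hki, Ne.symm hkj] at hi hj
    simp only [Pi.zero_apply] at p1 p2 p3 p4
    have q1 : g (Pi.single k 1) i = 0 := by omega
    have q2 : g (Pi.single k 1) j = 0 := by omega
    rw [hexpk, q1, q2]; simp
  have hid : ∀ y, g y = y := by
    intro y
    rw [hgdef, wordMap_eq_sum]
    conv_rhs => rw [show y = C.wordMap b [] y from rfl, wordMap_eq_sum]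
    refine Finset.sum_congr rfl fun k _ => ?_
    rw [← hgdef, hgk]; rfl
  funext y
  have h1 : C.wordMap b v' (g y) = C.wordMap b v y := by
    rw [hgdef, wordMap_append, Function.comp, ht, wordMap_reverse']
  rw [← h1, hid]

/-- The Coxeter relation in rank two. -/
theorem braid (hC : C.IsFRS) (i j : I) (b : A) (hij : i ≠ j) :
    WEq C b (alt i j (C.mnum i j b)) (alt j i (C.mnum i j b)) := by
  refine ⟨wordTarget_alt_eq hC i j b hij, ?_⟩
  refine eq_of_both_neg hC hij (mem_alt i j _) (fun x hx => (mem_alt j i _ x hx).symm)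
    (wordTarget_alt_eq hC i j b hij) (by simp [length_alt]) (alt_neg hC i j b hij) ?_
  intro x hx
  have := alt_neg hC j i b hij.symm x hx.symm
  rwa [mnum_symm] at this

/-- A word in two letters with as many inversions as letters is alternating. -/
theorem eq_alt (hC : C.IsFRS) {i j : I} (v : List I) : ∀ (b : A),
    (∀ x ∈ v, x = i ∨ x = j) → C.N b v = v.length →
    v = alt i j v.length ∨ v = alt j i v.length := by
  induction v using List.reverseRecOn with
  | nil => intro b _ _; exact Or.inl rfl
  | append_singleton v x ih =>
    have key : ∀ (i j : I), (v = alt i j v.length ∨ v = alt j i v.length) → ∀ b,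
        C.N b (v ++ [i]) = (v ++ [i]).length →
        v ++ [i] = alt i j (v ++ [i]).length := by
      intro i j h b hN
      rw [List.length_append, List.length_singleton, alt]
      congr 1
      rcases h with h | h
      · cases hl : v.length with
        | zero => simpa [alt] using hl
        | succ n =>
          exfalso
          rw [hl, alt] at h
          rw [List.length_append, List.length_singleton, hl, h, (WEq.cancel b _ i).N_eq] at hN
          have := N_le_length hC b (alt j i n)
          rw [length_alt] at this
          omega
      · exact h
    intro b hv hN
    have hN' : C.N (C.ρ x b) v = v.length := by
      have h1 : C.N b (v ++ [x]) ≤ C.N (C.ρ x b) v + C.N b [x] := N_append_le hC b v [x]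
      rw [N_singleton hC, hN, List.length_append, List.length_singleton] at h1
      have := N_le_length hC (C.ρ x b) v
      omega
    have h := ih (C.ρ x b) (fun y hy => hv y (by simp [hy])) hN'
    rcases hv x (by simp) with rfl | rfl
    · exact Or.inl (key x j h b hN)
    · exact Or.inr (key x i h.symm b hN)

/-! ### The exchange property -/

/-- Exchange: a word `l` with as many inversions as letters that makes `α_j` negative is
equivalent to a word of the same length ending in `j`. -/
theorem exchange (hC : C.IsFRS) (n : ℕ) : ∀ (b : A) (l : List I) (j : I), l.length = n →
    C.N b l = n → ¬ 0 ≤ C.wordMap b l (Pi.single j 1) →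
    ∃ l', WEq C b l (l' ++ [j]) ∧ l'.length + 1 = n := by
  induction n using Nat.strong_induction_on with
  | _ n IH =>
  intro b l j hl hN hj
  rcases List.eq_nil_or_concat' l with rfl | ⟨l1, i, rfl⟩
  · exact absurd (single_nonneg' j) hj
  rw [List.length_append, List.length_singleton] at hl
  by_cases hij : i = j
  · subst hij
    exact ⟨l1, ⟨rfl, rfl⟩, hl⟩
  have hi := neg_last hC b l1 i (by omega)
  -- split off on the right a subword in `i`, `j` that is as long as possible
  let P : ℕ → Prop := fun k => ∃ u v : List I, u.length = k ∧ u.length + v.length = n ∧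
    (∀ x ∈ v, x = i ∨ x = j) ∧ v ≠ [] ∧ WEq C b (l1 ++ [i]) (u ++ v)
  have hP : ∃ k, P k := ⟨l1.length, l1, [i], rfl, hl, by simp, by simp, rfl, rfl⟩
  classical
  obtain ⟨u, v, hu, huv, hv, hv0, hw⟩ := Nat.find_spec hP
  have hmin := fun k => Nat.find_min (H := hP) (m := k)
  rw [← hu] at hmin
  have hvpos := List.length_pos_iff.2 hv0
  have hNle := N_append_le hC b u v
  rw [← hw.N_eq, hN] at hNle
  have hNu := N_le_length hC (C.wordTarget b v) u
  have hNv := N_le_length hC b v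
  have hupos : ∀ x, x = i ∨ x = j →
      0 ≤ C.wordMap (C.wordTarget b v) u (Pi.single x 1) := by
    intro x hx
    by_contra hneg
    obtain ⟨u', hu', hlu'⟩ := IH u.length (by omega) _ u x rfl (by omega) hneg
    refine hmin u'.length (by omega) ⟨u', x :: v, rfl, ?_, ?_, by simp, ?_⟩
    · simp only [List.length_cons]; omega
    · intro y hy
      rcases List.mem_cons.1 hy with rfl | hy
      · exact hx
      · exact hv y hy
    · have := hw.trans (hu'.append_right v)
      rwa [List.append_assoc, List.singleton_append] at this
  have hvneg : ∀ x, x = i ∨ x = j → ¬ 0 ≤ C.wordMap b v (Pi.single x 1) := by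
    intro x hx hpos
    have h1 : 0 ≤ C.wordMap b (u ++ v) (Pi.single x 1) := by
      rw [wordMap_append]
      refine wordMap_nonneg _ u {i, j} (fun y hy => hupos y (by simpa using hy)) hpos ?_
      intro y hy
      have hy' : ¬ (y = i ∨ y = j) := by simpa using hy
      rw [wordMap_apply_of_notMem _ _ _ _ fun h => hy' (hv y h), Pi.single_eq_of_ne]
      rintro rfl; exact hy' hx
    rw [← hw.2] at h1
    rcases hx with rfl | rfl
    · exact hi h1
    · exact hj h1
  have hvm : v.length = C.mnum i j b := by
    have := inv_eq_S hC hv (hvneg i (Or.inl rfl)) (hvneg j (Or.inr rfl))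
    rw [mnum, ← this, ← N]
    omega
  have hvalt : WEq C b v (alt j i v.length) := by
    rcases eq_alt hC v b hv (by omega) with h | h
    · have hb := braid hC i j b hij
      rw [← hvm, ← h] at hb
      exact hb
    · rw [← h]; exact ⟨rfl, rfl⟩
  obtain ⟨t, ht⟩ : ∃ t, v.length = t + 1 := ⟨v.length - 1, by omega⟩
  rw [ht, alt] at hvalt
  refine ⟨u ++ alt i j t, ?_, ?_⟩
  · have := hw.trans (hvalt.append_left u)
    rwa [← List.append_assoc] at this
  · rw [List.length_append, length_alt]; omega

/-- Every word is equivalent to one whose length is its number of inversions. -/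
theorem exists_reduced (hC : C.IsFRS) (l : List I) : ∀ b : A,
    ∃ l', WEq C b l l' ∧ l'.length = C.N b l := by
  induction l using List.reverseRecOn with
  | nil => intro b; exact ⟨[], ⟨rfl, rfl⟩, by rw [N_nil]; rfl⟩
  | append_singleton l j ih =>
    intro b
    obtain ⟨l', hw, hl⟩ := ih (C.ρ j b)
    by_cases h : 0 ≤ C.wordMap (C.ρ j b) l (Pi.single j 1)
    · exact ⟨l' ++ [j], hw.append_right [j], by simp [N_snoc_pos hC b l j h, hl]⟩
    · have hN := N_snoc_neg hC b l j h
      obtain ⟨l'', hw', hl'⟩ := exchange hC _ (C.ρ j b) l' j hl hw.N_eq.symm (by rwa [← hw.2])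
      refine ⟨l'', ((hw.trans hw').append_right (b := b) [j]).trans (WEq.cancel b l'' j), ?_⟩
      omega

/-! ### Morphisms: length, weak order, parabolic subgroupoids -/

theorem len_le_of_realizes {w : Mor C} {l : List I} (h : Realizes w l) : len w ≤ l.length :=
  Nat.sInf_le ⟨l, h, rfl⟩

theorem exists_isReduced (w : Mor C) : ∃ l, IsReduced w l := by
  obtain ⟨l, hl⟩ := w.spec
  exact Nat.sInf_mem (s := {k | ∃ l : List I, Realizes w l ∧ l.length = k}) ⟨_, l, hl, rfl⟩

theorem Realizes.wEq {w : Mor C} {l l' : List I} (h : Realizes w l) (h' : Realizes w l') :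
    WEq C w.src l l' :=
  ⟨h.1.trans h'.1.symm, h.2.trans h'.2.symm⟩

/-- The length of a morphism is its number of inversions. -/
theorem len_eq_N (hC : C.IsFRS) {w : Mor C} {l : List I} (h : Realizes w l) :
    len w = C.N w.src l := by
  apply le_antisymm
  · obtain ⟨l', hw, hl⟩ := exists_reduced hC l w.src
    rw [← hl]
    exact len_le_of_realizes ⟨hw.1.symm.trans h.1, hw.2.symm.trans h.2⟩
  · obtain ⟨l', hr, hl⟩ := exists_isReduced w
    rw [← hl, (h.wEq hr).N_eq]
    exact N_le_length hC _ _

theorem comp_src (u v : Mor C) (h : v.tgt = u.src) : (u.comp v).src = v.src := by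
  rw [Mor.comp, dif_pos h]

theorem comp_tgt (u v : Mor C) (h : v.tgt = u.src) : (u.comp v).tgt = u.tgt := by
  rw [Mor.comp, dif_pos h]

theorem comp_toFun (u v : Mor C) (h : v.tgt = u.src) :
    (u.comp v).toFun = u.toFun ∘ v.toFun := by
  rw [Mor.comp, dif_pos h]

theorem Realizes.comp {u v : Mor C} {p q : List I} (h : v.tgt = u.src) (hu : Realizes u p)
    (hv : Realizes v q) : Realizes (u.comp v) (p ++ q) := by
  refine ⟨?_, ?_⟩
  · rw [comp_src u v h, comp_tgt u v h, wordTarget_append, hv.1, h, hu.1]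
  · rw [comp_src u v h, comp_toFun u v h, wordMap_append, hv.1, h, hu.2, hv.2]

theorem len_idMor (a : A) : len (idMor C a) = 0 :=
  Nat.le_zero.1 (len_le_of_realizes (l := []) ⟨rfl, rfl⟩)

theorem eq_idMor_of_len (v : Mor C) (h : len v = 0) : v = idMor C v.tgt := by
  obtain ⟨l, hr, hl⟩ := exists_isReduced v
  rw [h, List.length_eq_zero_iff] at hl
  subst hl
  exact Mor.ext hr.1 rfl hr.2.symm

theorem idMor_comp (x : Mor C) : (idMor C x.tgt).comp x = x :=
  Mor.ext (comp_src _ _ rfl) (comp_tgt _ _ rfl) (comp_toFun _ _ rfl)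

theorem comp_idMor (x : Mor C) : x.comp (idMor C x.src) = x :=
  Mor.ext (comp_src _ (idMor C x.src) rfl) (comp_tgt _ (idMor C x.src) rfl)
    (comp_toFun _ (idMor C x.src) rfl)

theorem weakLe_antisymm {u w : Mor C} (h : weakLe u w) (h' : weakLe w u) : u = w := by
  obtain ⟨v, hv, hw, hl⟩ := h
  obtain ⟨v', _, _, hl'⟩ := h'
  have h1 := eq_idMor_of_len v (by omega)
  rw [hv] at h1
  rw [hw, h1, comp_idMor]

theorem idMor_weakLe (x : Mor C) : weakLe (idMor C x.tgt) x :=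
  ⟨x, rfl, (idMor_comp x).symm, by rw [len_idMor, zero_add]⟩

variable (C) in
/-- The morphism with source `b` represented by a word. -/
def wordMor (b : A) (l : List I) : Mor C := ⟨b, C.wordTarget b l, C.wordMap b l, l, rfl, rfl⟩

theorem realizes_wordMor (b : A) (l : List I) : Realizes (wordMor C b l) l := ⟨rfl, rfl⟩

/-- If all inversions of `y⁻¹ x` are inversions of `x`, then `y ≤_R x`. -/
theorem weakLe_of_inv_subset (hC : C.IsFRS) {x y : Mor C} {lx ly : List I}
    (hx : Realizes x lx) (hy : Realizes y ly) (ht : y.tgt = x.tgt)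
    (h : C.inv x.src (ly.reverse ++ lx) ⊆ C.inv x.src lx) : weakLe y x := by
  have hyr : C.wordTarget x.tgt ly.reverse = y.src := by
    rw [← ht, ← hy.1, wordTarget_reverse]
  have hvt : (wordMor C x.src (ly.reverse ++ lx)).tgt = y.src := by
    change C.wordTarget x.src (ly.reverse ++ lx) = y.src
    rw [wordTarget_append, hx.1, hyr]
  have hw : WEq C x.src (ly ++ (ly.reverse ++ lx)) lx := by
    refine ⟨?_, ?_⟩
    · rw [wordTarget_append, wordTarget_append, hx.1, hyr, hy.1, ht]
    · funext v
      rw [wordMap_append, wordMap_append, Function.comp, Function.comp, wordTarget_append, hx.1,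
        hyr]
      have := wordMap_reverse' (C := C) y.src ly (C.wordMap x.src lx v)
      rwa [hy.1, ht] at this
  have hr := Realizes.comp hvt hy (realizes_wordMor x.src (ly.reverse ++ lx))
  have hc : x = y.comp (wordMor C x.src (ly.reverse ++ lx)) := by
    refine Mor.ext (comp_src _ _ hvt).symm ?_ ?_
    · rw [comp_tgt _ _ hvt, ht]
    · rw [← hr.2, comp_src _ _ hvt, ← hx.2]
      exact hw.2.symm
  refine ⟨_, hvt, hc, ?_⟩
  rw [len_eq_N hC hx, len_eq_N hC hy, len_eq_N hC (realizes_wordMor _ _), ← hw.N_eq,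
    N_append_eq hC]
  · congr 2
  · intro α hα
    have := h hα
    rwa [inv, ← hw.2] at this

theorem len_le_card (hC : C.IsFRS) (x : Mor C) : len x ≤ ∑ b : A, (C.roots b).ncard := by
  obtain ⟨l, hl⟩ := x.spec
  rw [len_eq_N hC (w := x) hl]
  exact (Set.ncard_le_ncard (fun _ h => h.1) (hC.1 x.src)).trans
    (Finset.single_le_sum (f := fun b => (C.roots b).ncard) (fun _ _ => Nat.zero_le _)
      (Finset.mem_univ x.src))

/-- An element of maximal length in `Hom(-,a) ∩ W_J` makes `α_j` negative for every `j ∈ J`, and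
therefore lies above all others. -/
theorem exists_longest (hC : C.IsFRS) (a : A) (J : Set I) : ∃ m : Mor C, IsLongestPar a J m := by
  have hfin : {k | ∃ x : Mor C, x.tgt = a ∧ InParabolic J x ∧ len x = k}.Finite :=
    (Set.finite_Iic (∑ b : A, (C.roots b).ncard)).subset (by
      rintro k ⟨x, -, -, rfl⟩
      exact len_le_card hC x)
  obtain ⟨k, ⟨x, hxt, hxJ, rfl⟩, hmax⟩ := hfin.exists_maximal
    ⟨0, idMor C a, rfl, ⟨[], by simp, rfl, rfl⟩, len_idMor a⟩
  obtain ⟨lx, hlJ, hx⟩ := hxJ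
  have hmax : ∀ y : Mor C, y.tgt = a → InParabolic J y → len y ≤ len x := by
    intro y hy hyJ
    by_contra hlt
    exact hlt (hmax ⟨y, hy, hyJ, rfl⟩ (by omega))
  have hneg : ∀ j ∈ J, ¬ 0 ≤ C.wordMap x.src lx (Pi.single j 1) := by
    intro j hj hpos
    have h1 := N_snoc_pos hC (C.ρ j x.src) lx j (by rwa [C.ρ_invol])
    have h2 := hmax (wordMor C (C.ρ j x.src) (lx ++ [j])) ?_
      ⟨lx ++ [j], ?_, realizes_wordMor _ _⟩
    · rw [len_eq_N hC (realizes_wordMor _ _), len_eq_N hC hx] at h2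
      rw [C.ρ_invol] at h1
      change C.N (C.ρ j x.src) (lx ++ [j]) ≤ _ at h2
      omega
    · change C.wordTarget (C.ρ j x.src) (lx ++ [j]) = a
      rw [wordTarget_append]
      simp only [wordTarget, C.ρ_invol]
      rw [hx.1, hxt]
    · intro i hi
      rw [List.mem_append, List.mem_singleton] at hi
      rcases hi with hi | rfl
      · exact hlJ i hi
      · exact hj
  refine ⟨x, hxt, ⟨lx, hlJ, hx⟩, ?_⟩
  rintro y hyt ⟨ly, hlyJ, hy⟩
  refine weakLe_of_inv_subset hC hx hy (hyt.trans hxt.symm) fun α hα => ⟨hα.1, hα.2.1, ?_⟩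
  rw [← le_zero_iff_not hC (wordMap_mem_roots hα.1 lx)]
  refine wordMap_nonpos hC J _ _ hneg hα.2.1 fun k hk => support_of_mem_inv hC hα k ?_
  rw [List.mem_append, List.mem_reverse]
  exact fun h => h.elim (fun h => hk (hlyJ k h)) (fun h => hk (hlJ k h))

/-- Reduced decompositions of elements of `W_J` use only letters in `J`: otherwise the rightmost
letter `i ∉ J` yields an inversion with `i`-coordinate `1`. -/
theorem mem_of_mem_reduced (hC : C.IsFRS) {J : Set I} {m : Mor C} (hm : InParabolic J m)
    {l : List I} (hl : IsReduced m l) : ∀ i ∈ l, i ∈ J := by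
  obtain ⟨lm, hlm, hr⟩ := hm
  by_contra! hex
  obtain ⟨p, i, q, rfl, hiJ, hq⟩ : ∃ p i q, l = p ++ i :: q ∧ i ∉ J ∧ ∀ x ∈ q, x ∈ J := by
    clear hl
    induction l with
    | nil => simp at hex
    | cons x t ih =>
      by_cases ht : ∃ i ∈ t, i ∉ J
      · obtain ⟨p, i, q, rfl, h1, h2⟩ := ih ht
        exact ⟨x :: p, i, q, rfl, h1, h2⟩
      · push Not at ht
        obtain ⟨i, hi, hiJ⟩ := hex
        rcases List.mem_cons.1 hi with rfl | hi
        · exact ⟨[], i, t, rfl, hiJ, ht⟩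
        · exact absurd (ht i hi) hiJ
  set b := m.src
  set c := C.wordTarget b q with hc
  have hN : C.N b (p ++ i :: q) = (p ++ i :: q).length := by
    rw [hl.2, len_eq_N hC hl.1]
  have h1 := N_append_le hC b (p ++ [i]) q
  rw [List.append_assoc, List.singleton_append, hN, ← hc] at h1
  have h2 := N_le_length hC b q
  have hp : 0 ≤ C.wordMap (C.ρ i c) p (Pi.single i 1) := by
    by_contra hneg
    have h3 := N_snoc_neg hC c p i hneg
    have h4 := N_le_length hC (C.ρ i c) p
    simp only [List.length_append, List.length_cons] at h1
    omega
  have hq' : i ∉ q.reverse := fun h => hiJ (hq i (List.mem_reverse.1 h))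
  have hβ1 : C.wordMap c q.reverse (Pi.single i 1) i = 1 := by
    rw [wordMap_apply_of_notMem _ _ _ _ hq', Pi.single_eq_same]
  have hβr := wordMap_mem_roots (single_mem_roots (C := C) c i) q.reverse
  rw [hc, wordTarget_reverse, ← hc] at hβr
  have hβ : C.wordMap c q.reverse (Pi.single i 1) ∈ C.inv b lm := by
    refine ⟨hβr, nonneg_of_coord hC hβr i (by omega), ?_⟩
    have hw := (hr.wEq hl.1).2
    rw [hw, ← List.singleton_append, ← List.append_assoc, wordMap_append, Function.comp, hc,
      wordMap_reverse', ← hc, wordMap_snoc_single, neg_nonneg]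
    exact fun h => ne_zero_of_mem_roots
      (wordMap_mem_roots (single_mem_roots (C := C) (C.ρ i c) i) p) (le_antisymm h hp)
  have := support_of_mem_inv hC hβ i fun h => hiJ (hlm i h)
  omega

theorem Jset_longest (hC : C.IsFRS) {a : A} {J : Set I} {m : Mor C} (hm : IsLongestPar a J m) :
    Jset m = J := by
  ext i
  constructor
  · rintro ⟨l, hl, hi⟩
    exact mem_of_mem_reduced hC hm.2.1 hl i hi
  · intro hi
    have hs : Realizes (sgen C a i) [i] :=
      ⟨by simp [wordTarget, sgen, C.ρ_invol], Function.comp_id _⟩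
    obtain ⟨v, hv, hmv, hl⟩ := hm.2.2 (sgen C a i) rfl ⟨[i], by simpa using hi, hs⟩
    obtain ⟨lv, hrv, hlv⟩ := exists_isReduced v
    refine ⟨[i] ++ lv, ⟨?_, ?_⟩, by simp⟩
    · rw [hmv]; exact Realizes.comp hv hs hrv
    · rw [hl, len_eq_N hC hs, N_singleton hC, List.length_append, hlv]; rfl

end CartanScheme

variable {I A : Type} [Fintype I] [DecidableEq I] [Fintype A] [Nonempty A] [DecidableEq A]

open CartanScheme


/-- `Hom(-,a) ∩ W_J(C)` with the right weak order has the unique minimal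
element `id^a` and a unique maximal element `w_J`, and `J(w_J) = J`. -/
theorem parabolic_min_max (C : CartanScheme I A) (hC : C.IsFRS) (a : A) (J : Set I) :
    (∀ x : Mor C, x.tgt = a → InParabolic J x → weakLe (idMor C a) x) ∧
    (∃! m : Mor C, IsLongestPar a J m) ∧
    (∀ m : Mor C, IsLongestPar a J m → Jset m = J) := by
  refine ⟨?_, ?_, fun m hm => Jset_longest hC hm⟩
  · rintro x rfl _
    exact idMor_weakLe x
  · obtain ⟨m, hm⟩ := exists_longest hC a J
    exact ⟨m, hm, fun m' hm' =>
      weakLe_antisymm (hm.2.2 m' hm'.1 hm'.2.1) (hm'.2.2 m hm.1 hm.2.1)⟩
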